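/- Main lower bound (Theorem 1). Let M be a class of bandit models on an action set Π, each model M given by mean reward function f_M : Π → [0,1] with variance-1 Gaussian reward noise, and assume sup_{M∈M} f_M(π_M) = 1. Let C ≥ 2 be an integer, let T ≥ 1, and let ε satisfy 4/T ≤ ε ≤ 1/(3C√T). Set Δ := dec^γ_ε(M) and suppose M is ρ-localized with ρ ≥ 6C²ε and that Δ ≥ 6C²ε. Then for any algorithm {p_t}_{t=1}^T there exists a model M ∈ M such that, under the trajectory law P^M induced by the algorithm and ground truth M, P^M[ (1/T)·Reg_γ(T) ≥ Δ − 3·min(ρ, Δ+1−γ)/C ] ≥ 1/(3C). -/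

import Mathlib

open MeasureTheory ProbabilityTheory
open scoped ENNReal NNReal

noncomputable section

/-- Trajectory law of a bandit algorithm with Gaussian variance-1 reward noise:
the law of `((π₁,r₁),…,(π_n,r_n))` where `π_t ∼ alg t` applied to the history and
`r_t ∼ N(f π_t, 1)`. -/
def trajMeasure {P : Type*} [MeasurableSpace P] (f : P → ℝ)
    (alg : (t : ℕ) → Kernel (Fin t → P × ℝ) P) :
    (n : ℕ) → Measure (Fin n → P × ℝ)
  | 0 => Measure.dirac (fun i : Fin 0 => i.elim0)
  | (n+1) => (trajMeasure f alg n).bind fun h =>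
      (alg n h).bind fun a =>
        (gaussianReal (f a) 1).map fun r => Fin.snoc h (a, r)

/-- Constrained γ-DEC of a class of mean reward functions with respect to a
reference mean function `fbar`:
`inf_p sup { E_{π∼p}[γ f* − f(π)] : f ∈ F, E_{π∼p}[(f(π)−fbar(π))²] ≤ ε² }`. -/
def decConstrained {P : Type*} [MeasurableSpace P] (γ ε : ℝ)
    (F : Set (P → ℝ)) (fbar : P → ℝ) : ℝ :=
  ⨅ p : ProbabilityMeasure P,
    ⨆ f : {f : P → ℝ // f ∈ F ∧ ∫ x, (f x - fbar x)^2 ∂(p : Measure P) ≤ ε^2},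
      ∫ x, (γ * (⨆ y, (f : P → ℝ) y) - (f : P → ℝ) x) ∂(p : Measure P)

/-- The γ-DEC of a model class: the supremum over reference mean functions `fbar`
(with values in [0,1], not necessarily in the class) of the constrained γ-DEC of
`F ∪ {fbar}` with respect to `fbar`. -/
def dec {P : Type*} [MeasurableSpace P] (γ ε : ℝ) (F : Set (P → ℝ)) : ℝ :=
  ⨆ fbar : {g : P → ℝ // Measurable g ∧ ∀ x, g x ∈ Set.Icc (0:ℝ) 1},
    decConstrained γ ε (F ∪ {(fbar : P → ℝ)}) fbar

open InformationTheory

/-!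
Fix a reference model `g` that nearly attains the DEC, and stop the algorithm, by overwriting its
play with a near-optimal action of `g`, as soon as its total deficit under `g` exceeds a budget.
The DEC, applied to the average play of the stopped algorithm under `g`, yields a model `f ∈ F`
that is close to `g` in mean square along these plays. By the chain rule for the Kullback-Leibler
divergence and Pinsker's inequality, `f` and `g` then give every event of stopped histories the same
probability up to `1 / (6 * C)`. Stopping keeps the average deficit of the play small, which rules
out the choice `f = g`, for which the DEC would force a large one.

Suppose that every model of `F` incurs low regret except with probability `1 / (3 * C)`. A first
pass with the budget `T * (Δ + (1 - γ) * g*)` transfers this to `g`: up to terms of order `T * ε`,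
the total reward under `g` is below `T * (γ * max g* (1 - ρ) - Δ)` only with probability `O(1 / C)`.
So under `g` the algorithm rarely exhausts the smaller budget `T * (g* - γ * max g* (1 - ρ) + Δ)`.
In a second pass with this budget, the total reward is large except on an event of probability
`O(1 / C)`, and not too small on that event, hence large on average under the corresponding model
`f`, whereas the DEC makes it small.
-/

section Trajectories

variable {P : Type*} [MeasurableSpace P]

lemma measurable_snoc {X : Type*} [MeasurableSpace X] {n : ℕ} :
    Measurable fun q : (Fin n → X) × X => (Fin.snoc q.1 q.2 : Fin (n + 1) → X) := by
  refine measurable_pi_iff.2 fun i => Fin.lastCases ?_ (fun j => ?_) i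
  · simpa only [Fin.snoc_last] using measurable_snd
  · simp only [Fin.snoc_castSucc]
    fun_prop

lemma bind_map_eq_map_compProd {α β δ : Type*} [MeasurableSpace α] [MeasurableSpace β]
    [MeasurableSpace δ] (μ : Measure α) [SFinite μ] (κ : Kernel α β) [IsSFiniteKernel κ]
    {g : α × β → δ} (hg : Measurable g) :
    (μ.bind fun a => (κ a).map fun b => g (a, b)) = (μ ⊗ₘ κ).map g := by
  rw [Measure.compProd_eq_comp_prod, Measure.map_comp _ _ hg]
  congr 1 with a : 1
  rw [Kernel.map_apply _ hg, Kernel.prod_apply, Kernel.id_apply, Measure.dirac_prod,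
    Measure.map_map hg measurable_prodMk_left]
  rfl

/-- The unit-variance Gaussian rewards with mean `m`, as a kernel. -/
def rewardKernel {A : Type*} [MeasurableSpace A] (m : A → ℝ) (hm : Measurable m) :
    Kernel A ℝ where
  toFun a := gaussianReal (m a) 1
  measurable' := measurable_gaussianReal.comp (hm.prodMk measurable_const)

instance {A : Type*} [MeasurableSpace A] (m : A → ℝ) (hm : Measurable m) :
    IsMarkovKernel (rewardKernel m hm) :=
  ⟨fun a => inferInstanceAs (IsProbabilityMeasure (gaussianReal (m a) 1))⟩

variable {f : P → ℝ} (alg : (t : ℕ) → Kernel (Fin t → P × ℝ) P)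
  [∀ t, IsMarkovKernel (alg t)]

lemma trajMeasure_succ (hf : Measurable f) (n : ℕ) [SFinite (trajMeasure f alg n)] :
    trajMeasure f alg (n + 1) =
      (trajMeasure f alg n ⊗ₘ
          (alg n ⊗ₖ rewardKernel (fun q => f q.2) (hf.comp measurable_snd))).map
        fun q => (Fin.snoc q.1 q.2 : Fin (n + 1) → P × ℝ) := by
  rw [← bind_map_eq_map_compProd _ _ measurable_snoc, trajMeasure]
  congr 1 with h : 1
  rw [Kernel.compProd_apply_eq_compProd_sectR]
  exact bind_map_eq_map_compProd (alg n h) (rewardKernel f hf)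
    (g := fun x => (Fin.snoc h x : Fin (n + 1) → P × ℝ))
    (measurable_snoc.comp measurable_prodMk_left)

lemma isProbabilityMeasure_trajMeasure (hf : Measurable f) (n : ℕ) :
    IsProbabilityMeasure (trajMeasure f alg n) := by
  induction n with
  | zero => exact inferInstanceAs (IsProbabilityMeasure (Measure.dirac _))
  | succ n ih =>
    rw [trajMeasure_succ alg hf]
    exact Measure.isProbabilityMeasure_map measurable_snoc.aemeasurable

end Trajectories

section Freezing

variable {X : Type*} {d : X → ℝ} {θ : ℝ} {c : X} {n : ℕ}

/-- The history `h` stopped by the budget `θ`: entries are kept as long as the cost `d` of the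
entries strictly before them is below `θ`, and are overwritten by `c` from then on. -/
def freeze (d : X → ℝ) (θ : ℝ) (c : X) (h : Fin n → X) (i : Fin n) : X :=
  if ∑ j ∈ Finset.Iio i, d (h j) < θ then h i else c

lemma sum_Iio_last_snoc (h : Fin n → X) (x : X) :
    ∑ j ∈ Finset.Iio (Fin.last n), d ((Fin.snoc h x : Fin (n + 1) → X) j) = ∑ i, d (h i) := by
  simp only [Fin.Iio_last_eq_map, Finset.sum_map, Fin.coe_castSuccEmb, Fin.snoc_castSucc]

lemma sum_snoc (h : Fin n → X) (x : X) :
    ∑ i, d ((Fin.snoc h x : Fin (n + 1) → X) i) = ∑ i, d (h i) + d x := by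
  simp only [Fin.sum_univ_castSucc, Fin.snoc_castSucc, Fin.snoc_last]

lemma freeze_snoc (h : Fin n → X) (x : X) :
    freeze d θ c (Fin.snoc h x : Fin (n + 1) → X) =
      (Fin.snoc (freeze d θ c h) (if ∑ i, d (h i) < θ then x else c) : Fin (n + 1) → X) := by
  funext i
  refine Fin.lastCases ?_ (fun j => ?_) i
  · simp only [freeze, sum_Iio_last_snoc, Fin.snoc_last]
  · simp only [freeze, Fin.sum_Iio_castSucc, Fin.snoc_castSucc]

lemma freeze_eq_self (hd : ∀ x, 0 ≤ d x) {h : Fin n → X} (hh : ∑ i, d (h i) < θ) :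
    freeze d θ c h = h := by
  funext i
  refine if_pos (lt_of_le_of_lt ?_ hh)
  exact Finset.sum_le_univ_sum_of_nonneg fun j => hd (h j)

lemma le_sum_live (hd : ∀ x, 0 ≤ d x) {h : Fin n → X} (hh : θ ≤ ∑ i, d (h i)) :
    θ ≤ ∑ i with ∑ j ∈ Finset.Iio i, d (h j) < θ, d (h i) := by
  induction h using Fin.snocInduction with
  | elim0 => simpa using hh
  | @snoc n h x ih =>
    rw [Finset.sum_filter, Fin.sum_univ_castSucc]
    simp only [Fin.sum_Iio_castSucc, Fin.snoc_castSucc, sum_Iio_last_snoc, Fin.snoc_last]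
    rw [← Finset.sum_filter]
    rcases lt_or_ge (∑ i, d (h i)) θ with hlt | hge
    · have live : ∀ i, ∑ j ∈ Finset.Iio i, d (h j) < θ := fun i =>
        (Finset.sum_le_univ_sum_of_nonneg fun j => hd (h j)).trans_lt hlt
      rw [if_pos hlt, Finset.filter_true_of_mem fun i _ => live i]
      exact hh.trans_eq (sum_snoc h x)
    · rw [if_neg hge.not_gt, add_zero]
      exact ih hge

lemma sum_freeze_lt_iff (hd : ∀ x, 0 ≤ d x) {h : Fin n → X} :
    ∑ i, d (freeze d θ c h i) < θ ↔ ∑ i, d (h i) < θ := by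
  refine ⟨fun hlt => ?_, fun hlt => by rwa [freeze_eq_self hd hlt]⟩
  contrapose! hlt
  calc θ ≤ ∑ i with ∑ j ∈ Finset.Iio i, d (h j) < θ, d (h i) := le_sum_live hd hlt
    _ = ∑ i, if ∑ j ∈ Finset.Iio i, d (h j) < θ then d (h i) else 0 := Finset.sum_filter ..
    _ ≤ ∑ i, d (freeze d θ c h i) := Finset.sum_le_sum fun i _ => by
      unfold freeze
      split_ifs
      exacts [le_rfl, hd c]

lemma sum_freeze_le {K η : ℝ} (hd : ∀ x, 0 ≤ d x) (hK : ∀ x, d x ≤ K) (hc : d c ≤ η)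
    (hθ : 0 ≤ θ + K) (h : Fin n → X) : ∑ i, d (freeze d θ c h i) ≤ θ + K + n * η := by
  induction h using Fin.snocInduction with
  | elim0 => simpa using hθ
  | @snoc n h x ih =>
    have hη : 0 ≤ n * η := mul_nonneg n.cast_nonneg ((hd c).trans hc)
    rw [freeze_snoc, sum_snoc]
    push_cast
    split_ifs with hlt
    · rw [freeze_eq_self hd hlt]
      linarith [hK x, (hd c).trans hc]
    · linarith

variable [MeasurableSpace X]

lemma measurable_sum_comp (hdm : Measurable d) (s : Finset (Fin n)) :
    Measurable fun h : Fin n → X => ∑ i ∈ s, d (h i) :=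
  Finset.measurable_sum _ fun i _ => hdm.comp (measurable_pi_apply i)

lemma measurable_freeze (hdm : Measurable d) :
    Measurable (freeze d θ c : (Fin n → X) → Fin n → X) :=
  measurable_pi_iff.2 fun i =>
    Measurable.ite (measurableSet_lt (measurable_sum_comp hdm _) measurable_const)
      (measurable_pi_apply i) measurable_const

/-- One round after the history `q.1`: the new entry `q.2` is kept only within the budget. -/
def freezeSnoc (d : X → ℝ) (θ : ℝ) (c : X) (q : (Fin n → X) × X) : Fin (n + 1) → X :=
  Fin.snoc q.1 (if ∑ i, d (q.1 i) < θ then q.2 else c)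

lemma measurable_freezeSnoc (hdm : Measurable d) :
    Measurable (freezeSnoc d θ c : (Fin n → X) × X → Fin (n + 1) → X) :=
  measurable_snoc.comp <| measurable_fst.prodMk <|
    Measurable.ite (measurableSet_lt ((measurable_sum_comp hdm _).comp measurable_fst)
      measurable_const) measurable_snd measurable_const

lemma map_freeze_compProd (hd : ∀ x, 0 ≤ d x) (hdm : Measurable d) (μ : Measure (Fin n → X))
    [IsFiniteMeasure μ] (κ κ' : Kernel (Fin n → X) X) [IsMarkovKernel κ] [IsMarkovKernel κ']
    (hκ : ∀ h, ∑ i, d (h i) < θ → κ' h = κ h) :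
    ((μ ⊗ₘ κ).map fun q => (Fin.snoc q.1 q.2 : Fin (n + 1) → X)).map (freeze d θ c) =
      (μ.map (freeze d θ c) ⊗ₘ κ').map (freezeSnoc d θ c) := by
  refine Measure.ext_of_lintegral _ fun G hG => ?_
  have hGf : Measurable fun h => G (freeze d θ c h) := hG.comp (measurable_freeze hdm)
  have hGc : Measurable fun q : (Fin n → X) × X =>
      G (freeze d θ c (Fin.snoc q.1 q.2 : Fin (n + 1) → X)) := hGf.comp measurable_snoc
  have hGs : Measurable fun q => G (freezeSnoc d θ c q) := hG.comp (measurable_freezeSnoc hdm)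
  rw [lintegral_map hG (measurable_freeze hdm), lintegral_map hGf measurable_snoc,
    Measure.lintegral_compProd hGc,
    lintegral_map hG (measurable_freezeSnoc hdm), Measure.lintegral_compProd hGs,
    lintegral_map hGs.lintegral_kernel_prod_right (measurable_freeze hdm)]
  refine lintegral_congr fun h => ?_
  simp only [freeze_snoc, freezeSnoc, sum_freeze_lt_iff hd]
  split_ifs with hlt
  · rw [freeze_eq_self hd hlt, hκ h hlt]
  · simp only [lintegral_const, measure_univ]

end Freezing

section Divergence

variable {α β : Type*} [MeasurableSpace α] [MeasurableSpace β]

lemma integral_sub_log_integral_exp_le_toReal_klDiv {μ ν : Measure α} [IsProbabilityMeasure μ]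
    [IsProbabilityMeasure ν] (hKL : klDiv μ ν ≠ ∞) {φ : α → ℝ} (hφ : Integrable φ μ)
    (hexp : Integrable (fun x => Real.exp (φ x)) ν) :
    ∫ x, φ x ∂μ - Real.log (∫ x, Real.exp (φ x) ∂ν) ≤ (klDiv μ ν).toReal := by
  obtain ⟨hac, hllr⟩ := klDiv_ne_top_iff.1 hKL
  have : IsProbabilityMeasure (ν.tilted φ) := isProbabilityMeasure_tilted hexp
  have gibbs := integral_llr_add_sub_measure_univ_nonneg
    (hac.trans (absolutelyContinuous_tilted hexp))
    (integrable_llr_tilted_right hac hφ hllr hexp)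
  rw [integral_llr_tilted_right hac hφ hexp hllr, probReal_univ, probReal_univ] at gibbs
  rw [toReal_klDiv_of_measure_eq hac (by simp only [measure_univ])]
  linarith

lemma integral_exp_mul_sub_integral_le {ν : Measure α} [IsProbabilityMeasure ν] {Y : α → ℝ}
    (hY : AEMeasurable Y ν) (hY01 : ∀ x, Y x ∈ Set.Icc (0 : ℝ) 1) (l : ℝ) :
    ∫ x, Real.exp (l * (Y x - ∫ y, Y y ∂ν)) ∂ν ≤ Real.exp (l ^ 2 / 8) := by
  refine ((hasSubgaussianMGF_of_mem_Icc hY (.of_forall hY01)).mgf_le l).trans_eq ?_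
  norm_num
  ring

/-- Pinsker's inequality, from Hoeffding's lemma and the Donsker-Varadhan bound for a multiple of
the indicator of `H`. -/
lemma two_mul_sq_measureReal_sub_le_toReal_klDiv {μ ν : Measure α} [IsProbabilityMeasure μ]
    [IsProbabilityMeasure ν] (hKL : klDiv μ ν ≠ ∞) {H : Set α} (hH : MeasurableSet H) :
    2 * (μ.real H - ν.real H) ^ 2 ≤ (klDiv μ ν).toReal := by
  set Y : α → ℝ := H.indicator 1 with hYdef
  set l : ℝ := 4 * (μ.real H - ν.real H)
  have hY : Measurable Y := measurable_one.indicator hH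
  have hY01 : ∀ x, Y x ∈ Set.Icc (0 : ℝ) 1 := fun x =>
    ⟨Set.indicator_nonneg (fun _ _ => zero_le_one) x, Set.indicator_le_self' (by simp) x⟩
  have hYint : ∀ ρ : Measure α, [IsProbabilityMeasure ρ] → Integrable Y ρ := fun ρ _ =>
    .of_mem_Icc 0 1 hY.aemeasurable (.of_forall hY01)
  have hYν : ∫ y, Y y ∂ν = ν.real H := integral_indicator_one hH
  have hexp : Integrable (fun x => Real.exp (l * (Y x - ν.real H))) ν := by
    simpa only [hYν] using
      (hasSubgaussianMGF_of_mem_Icc (μ := ν) hY.aemeasurable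
        (.of_forall hY01)).integrable_exp_mul l
  have hlog : Real.log (∫ x, Real.exp (l * (Y x - ν.real H)) ∂ν) ≤ l ^ 2 / 8 := by
    rw [Real.log_le_iff_le_exp (integral_exp_pos hexp), ← hYν]
    exact integral_exp_mul_sub_integral_le hY.aemeasurable hY01 l
  have hdv := integral_sub_log_integral_exp_le_toReal_klDiv hKL
    (((hYint μ).sub (integrable_const (ν.real H))).const_mul l) hexp
  have hφ : ∫ x, l * (Y x - ν.real H) ∂μ = l * (μ.real H - ν.real H) := by
    rw [integral_const_mul, integral_sub (hYint μ) (integrable_const _), integral_const,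
      hYdef, integral_indicator_one hH, probReal_univ, one_smul]
  simp only [Pi.sub_apply] at hdv
  nlinarith

lemma klDiv_withDensity {ν : Measure α} [IsFiniteMeasure ν] {f : α → ℝ≥0∞} (hf : Measurable f)
    [IsFiniteMeasure (ν.withDensity f)] :
    klDiv (ν.withDensity f) ν = ∫⁻ x, ENNReal.ofReal (klFun (f x).toReal) ∂ν := by
  rw [klDiv_eq_lintegral_klFun_of_ac (withDensity_absolutelyContinuous ν f)]
  refine lintegral_congr_ae ?_
  filter_upwards [Measure.rnDeriv_withDensity ν hf] with x hx
  rw [hx]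

lemma klDiv_compProd_withDensity (μ : Measure α) [IsFiniteMeasure μ] {κ η : Kernel α β}
    [IsMarkovKernel κ] [IsMarkovKernel η] {f : α → β → ℝ≥0∞}
    (hf : Measurable (Function.uncurry f)) (hκ : κ = η.withDensity f) :
    klDiv (μ ⊗ₘ κ) (μ ⊗ₘ η) = ∫⁻ a, klDiv (κ a) (η a) ∂μ := by
  have : IsMarkovKernel (η.withDensity f) := hκ ▸ inferInstance
  have hprod : μ ⊗ₘ κ = (μ ⊗ₘ η).withDensity fun q => f q.1 q.2 := by
    rw [hκ, Measure.compProd_withDensity hf]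
  have : IsFiniteMeasure ((μ ⊗ₘ η).withDensity fun q => f q.1 q.2) := hprod ▸ inferInstance
  rw [hprod, klDiv_withDensity (f := fun q : α × β => f q.1 q.2) hf, Measure.lintegral_compProd]
  · refine lintegral_congr fun a => ?_
    have hκa : κ a = (η a).withDensity (f a) := by rw [hκ, Kernel.withDensity_apply _ hf]
    have : IsFiniteMeasure ((η a).withDensity (f a)) := hκa ▸ inferInstance
    rw [hκa, klDiv_withDensity (f := f a) (hf.comp measurable_prodMk_left)]
  · exact (measurable_klFun.comp hf.ennreal_toReal).ennreal_ofReal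

/-- The log-likelihood ratio at `r` of the unit Gaussians with means `a` and `b`. -/
def gaussianLLR (a b r : ℝ) : ℝ := (a - b) * (r - b) - (a - b) ^ 2 / 2

lemma gaussianReal_eq_withDensity (a b : ℝ) :
    gaussianReal a 1 =
      (gaussianReal b 1).withDensity fun r => ENNReal.ofReal (Real.exp (gaussianLLR a b r)) := by
  have hm : Measurable fun r => ENNReal.ofReal (Real.exp (gaussianLLR a b r)) := by
    unfold gaussianLLR
    fun_prop
  rw [gaussianReal_of_var_ne_zero _ one_ne_zero, gaussianReal_of_var_ne_zero _ one_ne_zero,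
    ← withDensity_mul _ (measurable_gaussianPDF _ _) hm]
  congr 1 with r
  simp only [Pi.mul_apply, gaussianPDF, gaussianPDFReal, gaussianLLR]
  rw [← ENNReal.ofReal_mul (by positivity), mul_assoc _ (Real.exp _), ← Real.exp_add]
  congr 3
  simp only [NNReal.coe_one]
  ring

lemma klDiv_gaussianReal (a b : ℝ) :
    klDiv (gaussianReal a 1) (gaussianReal b 1) = ENNReal.ofReal ((a - b) ^ 2 / 2) := by
  have hac : gaussianReal a 1 ≪ gaussianReal b 1 :=
    gaussianReal_eq_withDensity a b ▸ withDensity_absolutelyContinuous _ _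
  have hllr : llr (gaussianReal a 1) (gaussianReal b 1) =ᵐ[gaussianReal a 1]
      gaussianLLR a b := by
    refine hac.ae_le ?_
    have hm : Measurable fun r => ENNReal.ofReal (Real.exp (gaussianLLR a b r)) := by
      unfold gaussianLLR
      fun_prop
    filter_upwards [Measure.rnDeriv_withDensity (gaussianReal b 1) hm] with r hr
    rw [llr, gaussianReal_eq_withDensity a b, hr, ENNReal.toReal_ofReal (Real.exp_pos _).le,
      Real.log_exp]
  have hid : Integrable (fun r : ℝ => r) (gaussianReal a 1) :=
    (memLp_id_gaussianReal 1).integrable le_rfl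
  have hlin : Integrable (fun r => (a - b) * (r - b)) (gaussianReal a 1) :=
    (hid.sub (integrable_const b)).const_mul _
  have hint : Integrable (gaussianLLR a b) (gaussianReal a 1) :=
    hlin.sub (integrable_const _)
  rw [klDiv_of_ac_of_integrable hac ((integrable_congr hllr).2 hint), integral_congr_ae hllr]
  simp only [gaussianLLR]
  rw [integral_sub hlin (integrable_const _), integral_const_mul,
    integral_sub hid (integrable_const _), integral_id_gaussianReal]
  simp only [integral_const, probReal_univ, smul_eq_mul]
  congr 1
  ring

lemma klDiv_compProd_rewardKernel (μ : Measure α) [IsFiniteMeasure μ] {m₁ m₂ : α → ℝ}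
    (hm₁ : Measurable m₁) (hm₂ : Measurable m₂) :
    klDiv (μ ⊗ₘ rewardKernel m₁ hm₁) (μ ⊗ₘ rewardKernel m₂ hm₂) =
      ∫⁻ a, ENNReal.ofReal ((m₁ a - m₂ a) ^ 2 / 2) ∂μ := by
  have hdens : Measurable (Function.uncurry fun a r =>
      ENNReal.ofReal (Real.exp (gaussianLLR (m₁ a) (m₂ a) r))) := by
    unfold gaussianLLR Function.uncurry
    fun_prop
  rw [klDiv_compProd_withDensity μ hdens]
  · exact lintegral_congr fun a => klDiv_gaussianReal (m₁ a) (m₂ a)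
  · ext1 a
    rw [Kernel.withDensity_apply _ hdens]
    exact gaussianReal_eq_withDensity (m₁ a) (m₂ a)

lemma klDiv_compProd_compProd_rewardKernel_le (μ : Measure α) [IsFiniteMeasure μ]
    (κ : Kernel α β) [IsMarkovKernel κ] {m₁ m₂ : α × β → ℝ} (hm₁ : Measurable m₁)
    (hm₂ : Measurable m₂) :
    klDiv (μ ⊗ₘ (κ ⊗ₖ rewardKernel m₁ hm₁)) (μ ⊗ₘ (κ ⊗ₖ rewardKernel m₂ hm₂)) ≤
      ∫⁻ q, ENNReal.ofReal ((m₁ q - m₂ q) ^ 2 / 2) ∂(μ ⊗ₘ κ) := by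
  rw [← klDiv_compProd_rewardKernel (μ ⊗ₘ κ) hm₁ hm₂, ← Measure.compProd_assoc',
    ← Measure.compProd_assoc']
  exact klDiv_map_le _ _ MeasurableEquiv.prodAssoc.measurable

end Divergence

section FrozenLaw

variable {P : Type*} [MeasurableSpace P] {d : P × ℝ → ℝ} {θ : ℝ} {c : P × ℝ} {f g : P → ℝ}
  (alg : (t : ℕ) → Kernel (Fin t → P × ℝ) P)

/-- The law of the first `n` rounds under the model `f`, stopped by `freeze`. -/
def frozenLaw (d : P × ℝ → ℝ) (θ : ℝ) (c : P × ℝ) (f : P → ℝ) (n : ℕ) :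
    Measure (Fin n → P × ℝ) :=
  (trajMeasure f alg n).map (freeze d θ c)

variable [∀ t, IsMarkovKernel (alg t)]

lemma isProbabilityMeasure_frozenLaw (hf : Measurable f) (hdm : Measurable d) (n : ℕ) :
    IsProbabilityMeasure (frozenLaw alg d θ c f n) :=
  have := isProbabilityMeasure_trajMeasure alg hf n
  Measure.isProbabilityMeasure_map (measurable_freeze hdm).aemeasurable

lemma frozenLaw_succ (hf : Measurable f) (hd : ∀ x, 0 ≤ d x) (hdm : Measurable d) {n : ℕ}
    {m : (Fin n → P × ℝ) × P → ℝ} (hm : Measurable m)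
    (hmf : ∀ h a, ∑ i, d (h i) < θ → m (h, a) = f a) :
    frozenLaw alg d θ c f (n + 1) =
      (frozenLaw alg d θ c f n ⊗ₘ (alg n ⊗ₖ rewardKernel m hm)).map (freezeSnoc d θ c) := by
  have := isProbabilityMeasure_trajMeasure alg hf n
  rw [frozenLaw, trajMeasure_succ alg hf]
  refine map_freeze_compProd hd hdm _ _ _ fun h hh => ?_
  rw [Kernel.compProd_apply_eq_compProd_sectR, Kernel.compProd_apply_eq_compProd_sectR]
  congr 1
  ext1 a
  exact congrArg (gaussianReal · 1) (hmf h a hh)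

lemma lintegral_compProd_fst {α β : Type*} [MeasurableSpace α] [MeasurableSpace β]
    (μ : Measure α) [SFinite μ] (κ : Kernel α β) [IsMarkovKernel κ] {Φ : α → ℝ≥0∞}
    (hΦ : Measurable Φ) : ∫⁻ q, Φ q.1 ∂(μ ⊗ₘ κ) = ∫⁻ a, Φ a ∂μ := by
  rw [← lintegral_map hΦ measurable_fst]
  exact congrArg (fun ρ => ∫⁻ a, Φ a ∂ρ) (Measure.fst_compProd μ κ)

lemma lintegral_compProd_compProd_fst {α β δ : Type*} [MeasurableSpace α] [MeasurableSpace β]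
    [MeasurableSpace δ] (μ : Measure α) [SFinite μ] (κ : Kernel α β) [IsMarkovKernel κ]
    (η : Kernel (α × β) δ) [IsMarkovKernel η] {Φ : α × β → ℝ≥0∞} (hΦ : Measurable Φ) :
    ∫⁻ q, Φ (q.1, q.2.1) ∂(μ ⊗ₘ (κ ⊗ₖ η)) = ∫⁻ q, Φ q ∂(μ ⊗ₘ κ) := by
  rw [← lintegral_compProd_fst (μ ⊗ₘ κ) η hΦ, ← Measure.compProd_assoc]
  exact (lintegral_map (hΦ.comp measurable_fst) MeasurableEquiv.prodAssoc.symm.measurable).symm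

lemma lintegral_sum_add_le_lintegral_sum_frozenLaw_succ (hf : Measurable f)
    (hd : ∀ x, 0 ≤ d x) (hdm : Measurable d) (n : ℕ) {G : P → ℝ≥0∞} (hG : Measurable G) :
    ∫⁻ h, ∑ i, G (h i).1 ∂frozenLaw alg d θ c f n +
        ∫⁻ q, (if ∑ i, d (q.1 i) < θ then G q.2 else 0) ∂(frozenLaw alg d θ c f n ⊗ₘ alg n) ≤
      ∫⁻ h, ∑ i, G (h i).1 ∂frozenLaw alg d θ c f (n + 1) := by
  have hsum : ∀ k, Measurable fun h : Fin k → P × ℝ => ∑ i, G (h i).1 := fun k =>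
    Finset.measurable_sum _ fun i _ => hG.comp (measurable_pi_apply i).fst
  have hlast : Measurable fun q : (Fin n → P × ℝ) × P =>
      if ∑ i, d (q.1 i) < θ then G q.2 else 0 :=
    Measurable.ite (measurableSet_lt ((measurable_sum_comp hdm _).comp measurable_fst)
      measurable_const) (hG.comp measurable_snd) measurable_const
  have := isProbabilityMeasure_frozenLaw alg hf hdm (θ := θ) (c := c) n
  have hfst : Measurable fun q : (Fin n → P × ℝ) × (P × ℝ) => ∑ i, G (q.1 i).1 :=
    (hsum n).comp measurable_fst
  rw [frozenLaw_succ alg hf hd hdm (hf.comp measurable_snd) fun _ _ _ => rfl,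
    lintegral_map (hsum _) (measurable_freezeSnoc hdm),
    ← lintegral_compProd_fst _ (alg n ⊗ₖ rewardKernel _ (hf.comp measurable_snd)) (hsum n),
    ← lintegral_compProd_compProd_fst _ (alg n) (rewardKernel _ (hf.comp measurable_snd)) hlast,
    ← lintegral_add_left hfst]
  refine lintegral_mono fun q => ?_
  rw [freezeSnoc, Fin.sum_univ_castSucc]
  simp only [Fin.snoc_castSucc, Fin.snoc_last]
  refine add_le_add_right ?_ _
  split_ifs
  exacts [le_rfl, zero_le]

lemma klDiv_frozenLaw_le (hf : Measurable f) (hg : Measurable g) (hd : ∀ x, 0 ≤ d x)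
    (hdm : Measurable d) (n : ℕ) :
    klDiv (frozenLaw alg d θ c g n) (frozenLaw alg d θ c f n) ≤
      ∫⁻ h, ∑ i, ENNReal.ofReal ((g (h i).1 - f (h i).1) ^ 2 / 2)
        ∂frozenLaw alg d θ c g n := by
  induction n with
  | zero =>
    have := isProbabilityMeasure_frozenLaw alg hg hdm (θ := θ) (c := c) 0
    exact (klDiv_self (frozenLaw alg d θ c g 0)).trans_le zero_le
  | succ n ih =>
    have := isProbabilityMeasure_frozenLaw alg hf hdm (θ := θ) (c := c) n
    have := isProbabilityMeasure_frozenLaw alg hg hdm (θ := θ) (c := c) n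
    -- After stopping the entry is overwritten, so the model `f` may as well reward like `g`.
    set m : (Fin n → P × ℝ) × P → ℝ := fun q => if ∑ i, d (q.1 i) < θ then f q.2 else g q.2
    have hm : Measurable m :=
      Measurable.ite (measurableSet_lt ((measurable_sum_comp hdm _).comp measurable_fst)
        measurable_const) (hf.comp measurable_snd) (hg.comp measurable_snd)
    have hgap : ∀ q : (Fin n → P × ℝ) × P, ENNReal.ofReal ((g q.2 - m q) ^ 2 / 2) =
        if ∑ i, d (q.1 i) < θ then ENNReal.ofReal ((g q.2 - f q.2) ^ 2 / 2) else 0 := fun q => by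
      by_cases hq : ∑ i, d (q.1 i) < θ <;> simp [m, hq]
    refine le_trans ?_ (lintegral_sum_add_le_lintegral_sum_frozenLaw_succ alg hg hd hdm n
      (G := fun a => ENNReal.ofReal ((g a - f a) ^ 2 / 2)) (by fun_prop))
    rw [frozenLaw_succ alg hg hd hdm (hg.comp measurable_snd) fun _ _ _ => rfl,
      frozenLaw_succ alg hf hd hdm hm fun h a hh => if_pos hh]
    refine (klDiv_map_le _ _ (measurable_freezeSnoc hdm)).trans ?_
    rw [klDiv_compProd_eq_add]
    refine add_le_add ih ((klDiv_compProd_compProd_rewardKernel_le _ _ _ _).trans_eq ?_)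
    exact lintegral_congr hgap

end FrozenLaw

section MeanRewards

variable {P : Type*} {f g G : P → ℝ} {n : ℕ}

/-- The sum over the rounds of a history of the values of `G` at the actions played; for a mean
reward function `G` this is the total expected reward of the actions. -/
def cumulative (G : P → ℝ) (h : Fin n → P × ℝ) : ℝ :=
  ∑ i, G (h i).1

lemma abs_cumulative_sub_le (f g : P → ℝ) (h : Fin n → P × ℝ) :
    |cumulative f h - cumulative g h| ≤ cumulative |f - g| h := by
  rw [cumulative, cumulative, ← Finset.sum_sub_distrib]
  exact Finset.abs_sum_le_sum_abs _ _

lemma cumulative_abs_nonneg (G : P → ℝ) (h : Fin n → P × ℝ) : 0 ≤ cumulative |G| h :=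
  Finset.sum_nonneg fun i _ => abs_nonneg (G (h i).1)

variable [MeasurableSpace P]

/-- A mean reward function of a bandit model: measurable, with values in `[0, 1]`. -/
structure IsMeanReward (f : P → ℝ) : Prop where
  measurable : Measurable f
  mem_Icc : ∀ x, f x ∈ Set.Icc (0 : ℝ) 1

namespace IsMeanReward

lemma le_iSup (hf : IsMeanReward f) (x : P) : f x ≤ ⨆ y, f y :=
  le_ciSup (f := f) ⟨1, Set.forall_mem_range.2 fun y => (hf.mem_Icc y).2⟩ x

lemma iSup_mem_Icc (hf : IsMeanReward f) : (⨆ x, f x) ∈ Set.Icc (0 : ℝ) 1 :=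
  ⟨Real.iSup_nonneg fun x => (hf.mem_Icc x).1, Real.iSup_le (fun x => (hf.mem_Icc x).2) zero_le_one⟩

lemma abs_le_one (hf : IsMeanReward f) (x : P) : |f x| ≤ 1 :=
  (abs_of_nonneg (hf.mem_Icc x).1).trans_le (hf.mem_Icc x).2

lemma abs_sub_le_one (hf : IsMeanReward f) (hg : IsMeanReward g) (x : P) : |(f - g) x| ≤ 1 :=
  abs_le.2 ⟨by linarith [Pi.sub_apply f g x, (hf.mem_Icc x).1, (hg.mem_Icc x).2],
    by linarith [Pi.sub_apply f g x, (hf.mem_Icc x).2, (hg.mem_Icc x).1]⟩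

end IsMeanReward

lemma measurable_cumulative (hG : Measurable G) :
    Measurable (cumulative G : (Fin n → P × ℝ) → ℝ) :=
  Finset.measurable_sum _ fun i _ => hG.comp (measurable_pi_apply i).fst

lemma integrable_cumulative (hG : Measurable G) {K : ℝ} (hK : ∀ x, |G x| ≤ K)
    (ν : Measure (Fin n → P × ℝ)) [IsFiniteMeasure ν] : Integrable (cumulative G) ν :=
  integrable_finsetSum _ fun i _ =>
    Integrable.of_bound (hG.comp (measurable_pi_apply i).fst).aestronglyMeasurable K
      (.of_forall fun h => hK (h i).1)

lemma integral_cumulative_abs_le (hG : Measurable G) {K : ℝ} (hK : ∀ x, |G x| ≤ K)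
    (ν : Measure (Fin n → P × ℝ)) [IsProbabilityMeasure ν] {ε : ℝ} (hε : 0 < ε)
    (hsq : ∫ h, cumulative (G ^ 2) h ∂ν ≤ n * ε ^ 2) :
    ∫ h, cumulative |G| h ∂ν ≤ n * ε := by
  have amgm : ∀ y : ℝ, 2 * ε * |y| ≤ y ^ 2 + ε ^ 2 := fun y => by
    linarith [two_mul_le_add_sq ε |y|, sq_abs y]
  have hpath : ∀ h : Fin n → P × ℝ,
      2 * ε * cumulative |G| h ≤ cumulative (G ^ 2) h + n * ε ^ 2 := fun h => by
    calc 2 * ε * cumulative |G| h = ∑ i, 2 * ε * |G (h i).1| := Finset.mul_sum ..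
      _ ≤ ∑ i, (G (h i).1 ^ 2 + ε ^ 2) := Finset.sum_le_sum fun i _ => amgm _
      _ = cumulative (G ^ 2) h + n * ε ^ 2 := by
        simp only [Finset.sum_add_distrib, Finset.sum_const, Finset.card_univ, Fintype.card_fin,
          nsmul_eq_mul, cumulative, Pi.pow_apply]
  have habs : Integrable (cumulative |G|) ν :=
    integrable_cumulative hG.abs (fun x => (abs_abs (G x)).trans_le (hK x)) ν
  have hsqi : Integrable (cumulative (G ^ 2)) ν :=
    integrable_cumulative (hG.pow_const 2)
      (fun x => (abs_pow (G x) 2).trans_le (pow_le_pow_left₀ (abs_nonneg _) (hK x) 2)) ν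
  have hmono := integral_mono (habs.const_mul (2 * ε)) (hsqi.add (integrable_const _)) hpath
  simp only [Pi.add_apply] at hmono
  rw [integral_const_mul, integral_add hsqi (integrable_const _), integral_const, probReal_univ,
    one_smul] at hmono
  refine le_of_mul_le_mul_left ?_ (mul_pos two_pos hε)
  linarith

/-- The law of the action played in a uniformly chosen round of a history drawn from `ν`. -/
def averagePlay (ν : Measure (Fin n → P × ℝ)) : Measure P :=
  (n : ℝ≥0∞)⁻¹ • ∑ i, ν.map fun h => (h i).1

lemma isProbabilityMeasure_averagePlay (hn : n ≠ 0) (ν : Measure (Fin n → P × ℝ))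
    [IsProbabilityMeasure ν] : IsProbabilityMeasure (averagePlay ν) := by
  have hmap : ∀ i : Fin n, (ν.map fun h => (h i).1) Set.univ = 1 := fun i =>
    (Measure.isProbabilityMeasure_map (measurable_pi_apply i).fst.aemeasurable).measure_univ
  refine ⟨?_⟩
  simp only [averagePlay, Measure.smul_apply, Measure.finsetSum_apply, hmap, Finset.sum_const,
    Finset.card_univ, Fintype.card_fin, nsmul_one, smul_eq_mul]
  exact ENNReal.inv_mul_cancel (Nat.cast_ne_zero.2 hn) (ENNReal.natCast_ne_top n)

lemma integral_averagePlay (hG : Measurable G) {K : ℝ} (hK : ∀ x, |G x| ≤ K)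
    (ν : Measure (Fin n → P × ℝ)) [IsFiniteMeasure ν] :
    ∫ x, G x ∂averagePlay ν = (n : ℝ)⁻¹ * ∫ h, cumulative G h ∂ν := by
  have hm : ∀ i : Fin n, Measurable fun h : Fin n → P × ℝ => (h i).1 := fun i =>
    (measurable_pi_apply i).fst
  have hround : ∀ i : Fin n, ∫ x, G x ∂(ν.map fun h => (h i).1) = ∫ h, G (h i).1 ∂ν := fun i =>
    integral_map (hm i).aemeasurable hG.aestronglyMeasurable
  unfold cumulative
  rw [averagePlay, integral_smul_measure, ENNReal.toReal_inv, ENNReal.toReal_natCast, smul_eq_mul,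
    integral_finsetSum_measure fun i _ =>
      Integrable.of_bound hG.aestronglyMeasurable K (.of_forall hK),
    integral_finsetSum (f := fun i (h : Fin n → P × ℝ) => G (h i).1) _ fun i _ =>
      Integrable.of_bound (hG.comp (hm i)).aestronglyMeasurable K (.of_forall fun h => hK (h i).1)]
  exact congrArg _ (Finset.sum_congr rfl fun i _ => hround i)

end MeanRewards

section HardReference

variable {P : Type*} [MeasurableSpace P] {F : Set (P → ℝ)} {γ ε δ : ℝ} {g : P → ℝ}

/-- The reference model `g` shows that the γ-DEC of `F` exceeds `δ`: whichever distribution over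
actions is played, some model within `ε` of `g` in mean square makes its regret exceed `δ`. -/
def IsHardReference (γ ε δ : ℝ) (F : Set (P → ℝ)) (g : P → ℝ) : Prop :=
  ∀ p : ProbabilityMeasure P, ∃ f ∈ F ∪ {g},
    ∫ x, (f x - g x) ^ 2 ∂(p : Measure P) ≤ ε ^ 2 ∧
      δ < ∫ x, (γ * (⨆ y, f y) - f x) ∂(p : Measure P)

lemma IsMeanReward.abs_integral_regret_le {f : P → ℝ} (hf : IsMeanReward f)
    (hγ : γ ∈ Set.Icc (0 : ℝ) 1) (p : ProbabilityMeasure P) :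
    |∫ x, (γ * (⨆ y, f y) - f x) ∂(p : Measure P)| ≤ 1 := by
  have hsup : γ * (⨆ y, f y) ∈ Set.Icc (0 : ℝ) 1 :=
    ⟨mul_nonneg hγ.1 hf.iSup_mem_Icc.1, mul_le_one₀ hγ.2 hf.iSup_mem_Icc.1 hf.iSup_mem_Icc.2⟩
  have hregret : ∀ x, |γ * (⨆ y, f y) - f x| ≤ 1 := fun x =>
    abs_le.2 ⟨by linarith [hsup.1, (hf.mem_Icc x).2], by linarith [hsup.2, (hf.mem_Icc x).1]⟩
  have hnorm := norm_integral_le_of_norm_le_const (μ := (p : Measure P))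
    (f := fun x => γ * (⨆ y, f y) - f x) (.of_forall hregret)
  rwa [probReal_univ, mul_one] at hnorm

lemma isHardReference_of_lt_decConstrained (hF : ∀ f ∈ F ∪ {g}, IsMeanReward f)
    (hγ : γ ∈ Set.Icc (0 : ℝ) 1) (hδ : δ < decConstrained γ ε (F ∪ {g}) g) :
    IsHardReference γ ε δ F g := by
  intro p
  let near (p : ProbabilityMeasure P) :=
    {f : P → ℝ // f ∈ F ∪ {g} ∧ ∫ x, (f x - g x) ^ 2 ∂(p : Measure P) ≤ ε ^ 2}
  let regret (p : ProbabilityMeasure P) (f : near p) : ℝ :=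
    ∫ x, (γ * (⨆ y, f.1 y) - f.1 x) ∂(p : Measure P)
  have bound : ∀ p (f : near p), |regret p f| ≤ 1 := fun p f =>
    (hF f.1 f.2.1).abs_integral_regret_le hγ p
  have self (p : ProbabilityMeasure P) : near p := ⟨g, Or.inr rfl, by simpa using sq_nonneg ε⟩
  have hbelow : BddBelow (Set.range fun p => ⨆ f, regret p f) := by
    refine ⟨-1, Set.forall_mem_range.2 fun p => (abs_le.1 (bound p (self p))).1.trans ?_⟩
    exact le_ciSup (f := regret p)
      ⟨1, Set.forall_mem_range.2 fun f => (abs_le.1 (bound p f)).2⟩ (self p)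
  have : Nonempty (near p) := ⟨self p⟩
  obtain ⟨f, hf⟩ := exists_lt_of_lt_ciSup (hδ.trans_le (ciInf_le hbelow p))
  exact ⟨f.1, f.2.1, f.2.2, hf⟩

lemma exists_isHardReference (hF : ∀ f ∈ F, IsMeanReward f) (hγ : γ ∈ Set.Icc (0 : ℝ) 1)
    (hδ : δ < dec γ ε F) : ∃ g, IsMeanReward g ∧ IsHardReference γ ε δ F g := by
  have : Nonempty {g : P → ℝ // Measurable g ∧ ∀ x, g x ∈ Set.Icc (0 : ℝ) 1} :=
    ⟨0, measurable_const, fun _ => ⟨le_rfl, zero_le_one⟩⟩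
  obtain ⟨⟨g, hgm, hg01⟩, hg⟩ := exists_lt_of_lt_ciSup hδ
  refine ⟨g, ⟨hgm, hg01⟩, isHardReference_of_lt_decConstrained ?_ hγ hg⟩
  rintro f (hf | rfl)
  exacts [hF f hf, ⟨hgm, hg01⟩]

lemma IsHardReference.exists_cumulative_lt (href : IsHardReference γ ε δ F g)
    (hF : ∀ f ∈ F, IsMeanReward f) (hg : IsMeanReward g) {n : ℕ} (hn : n ≠ 0)
    (ν : Measure (Fin n → P × ℝ)) [IsProbabilityMeasure ν] :
    ∃ f ∈ F ∪ {g}, IsMeanReward f ∧ ∫ h, cumulative ((f - g) ^ 2) h ∂ν ≤ n * ε ^ 2 ∧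
      ∫ h, cumulative f h ∂ν < n * (γ * (⨆ x, f x) - δ) := by
  have hn0 : (0 : ℝ) < n := Nat.cast_pos.2 (Nat.pos_of_ne_zero hn)
  have := isProbabilityMeasure_averagePlay hn ν
  obtain ⟨f, hfF, hnear, hregret⟩ := href ⟨averagePlay ν, this⟩
  have hf : IsMeanReward f := hfF.elim (hF f) fun hfg => Set.mem_singleton_iff.1 hfg ▸ hg
  have hsq : ∀ x, |((f - g) ^ 2) x| ≤ 1 := fun x =>
    (abs_pow _ 2).trans_le (pow_le_one₀ (abs_nonneg _) (hf.abs_sub_le_one hg x))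
  refine ⟨f, hfF, hf, ?_, ?_⟩
  · have havg := integral_averagePlay ((hf.measurable.sub hg.measurable).pow_const 2) hsq ν
    exact (inv_mul_le_iff₀ hn0).1 (havg.symm.trans_le hnear)
  · have havg := integral_averagePlay hf.measurable hf.abs_le_one ν
    have hfi : Integrable f (averagePlay ν) :=
      Integrable.of_bound hf.measurable.aestronglyMeasurable 1 (.of_forall hf.abs_le_one)
    rw [ProbabilityMeasure.coe_mk, integral_sub (integrable_const _) hfi, integral_const,
      probReal_univ, one_smul, havg] at hregret
    exact (inv_mul_lt_iff₀ hn0).1 (by linarith)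

end HardReference

section HardModel

variable {P : Type*} {f g : P → ℝ} {c : P × ℝ} {θ η : ℝ} {n : ℕ}

/-- The expected loss of a round under the model `g`, compared with its best action; this is the
cost charged to the budget of `freeze`. -/
def deficit (g : P → ℝ) (x : P × ℝ) : ℝ :=
  (⨆ y, g y) - g x.1

lemma sum_deficit (g : P → ℝ) (h : Fin n → P × ℝ) :
    ∑ i, deficit g (h i) = n * (⨆ y, g y) - cumulative g h := by
  simp only [deficit, cumulative, Finset.sum_sub_distrib, Finset.sum_const, Finset.card_univ,
    Fintype.card_fin, nsmul_eq_mul]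

variable [MeasurableSpace P]

lemma measurable_deficit (hg : Measurable g) : Measurable (deficit g) :=
  measurable_const.sub (hg.comp measurable_fst)

namespace IsMeanReward

lemma deficit_nonneg (hg : IsMeanReward g) (x : P × ℝ) : 0 ≤ deficit g x :=
  sub_nonneg.2 (hg.le_iSup x.1)

lemma deficit_le_one (hg : IsMeanReward g) (x : P × ℝ) : deficit g x ≤ 1 := by
  linarith [deficit.eq_1 g x, hg.iSup_mem_Icc.2, (hg.mem_Icc x.1).1]

lemma le_cumulative_freeze (hg : IsMeanReward g) (hc : deficit g c ≤ η) (hθ : 0 ≤ θ + 1)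
    (h : Fin n → P × ℝ) :
    n * (⨆ y, g y) - (θ + 1 + n * η) ≤ cumulative g (freeze (deficit g) θ c h) := by
  linarith [sum_freeze_le hg.deficit_nonneg hg.deficit_le_one hc hθ h,
    sum_deficit g (freeze (deficit g) θ c h)]

end IsMeanReward

variable {F : Set (P → ℝ)} {γ Δ ε b : ℝ} (alg : (t : ℕ) → Kernel (Fin t → P × ℝ) P)

lemma measureReal_frozenLaw (f : P → ℝ) (hg : Measurable g) {H : Set (Fin n → P × ℝ)}
    (hH : MeasurableSet H) :
    (frozenLaw alg (deficit g) θ c f n).real H =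
      (trajMeasure f alg n).real (freeze (deficit g) θ c ⁻¹' H) :=
  map_measureReal_apply (measurable_freeze (measurable_deficit hg)) hH

lemma ae_le_cumulative_frozenLaw (f : P → ℝ) (hg : IsMeanReward g) (hc : deficit g c ≤ η)
    (hθ : 0 ≤ θ + 1) :
    ∀ᵐ h ∂frozenLaw alg (deficit g) θ c f n,
      n * (⨆ y, g y) - (θ + 1 + n * η) ≤ cumulative g h :=
  (ae_map_iff (measurable_freeze (measurable_deficit hg.measurable)).aemeasurable
    (measurableSet_le measurable_const (measurable_cumulative hg.measurable))).2
    (.of_forall (hg.le_cumulative_freeze hc hθ))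

variable [∀ t, IsMarkovKernel (alg t)]

lemma measureReal_frozenLaw_le_add {d : P × ℝ → ℝ} (hf : IsMeanReward f) (hg : IsMeanReward g)
    (hd : ∀ x, 0 ≤ d x) (hdm : Measurable d) (hb : 0 ≤ b)
    (hsq : ∫ h, cumulative ((f - g) ^ 2) h ∂frozenLaw alg d θ c g n ≤ (2 * b) ^ 2)
    {H : Set (Fin n → P × ℝ)} (hH : MeasurableSet H) :
    (frozenLaw alg d θ c g n).real H ≤ (frozenLaw alg d θ c f n).real H + b := by
  have := isProbabilityMeasure_frozenLaw alg hg.measurable hdm (θ := θ) (c := c) n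
  have := isProbabilityMeasure_frozenLaw alg hf.measurable hdm (θ := θ) (c := c) n
  have hint : Integrable (cumulative ((f - g) ^ 2)) (frozenLaw alg d θ c g n) :=
    integrable_cumulative ((hf.measurable.sub hg.measurable).pow_const 2)
      (fun x => (abs_pow _ 2).trans_le (pow_le_one₀ (abs_nonneg _) (hf.abs_sub_le_one hg x))) _
  have hnonneg : ∀ h : Fin n → P × ℝ, 0 ≤ cumulative ((f - g) ^ 2) h := fun h =>
    Finset.sum_nonneg fun i _ => sq_nonneg ((f - g) (h i).1)
  have hpath : ∀ h : Fin n → P × ℝ, ∑ i, ENNReal.ofReal ((g (h i).1 - f (h i).1) ^ 2 / 2) =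
      ENNReal.ofReal (cumulative ((f - g) ^ 2) h / 2) := fun h => by
    simp only [cumulative, Pi.pow_apply, Pi.sub_apply, Finset.sum_div, sub_sq_comm (g _)]
    exact (ENNReal.ofReal_sum_of_nonneg fun i _ => by positivity).symm
  have hkl := klDiv_frozenLaw_le alg hf.measurable hg.measurable hd hdm n (θ := θ) (c := c)
  rw [lintegral_congr hpath, ← ofReal_integral_eq_lintegral_ofReal (hint.div_const 2)
    (.of_forall fun h => div_nonneg (hnonneg h) two_pos.le), integral_div] at hkl
  have hpinsker := two_mul_sq_measureReal_sub_le_toReal_klDiv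
    (hkl.trans_lt ENNReal.ofReal_lt_top).ne hH
  have hkl' := ENNReal.toReal_le_of_le_ofReal
    (div_nonneg (integral_nonneg hnonneg) two_pos.le) hkl
  have hdiff := abs_le_of_sq_le_sq (a := (frozenLaw alg d θ c g n).real H -
    (frozenLaw alg d θ c f n).real H) (by linarith) hb
  linarith [(abs_le.1 hdiff).2]

lemma IsHardReference.exists_confusable (href : IsHardReference γ ε (Δ - η) F g)
    (hF : ∀ f ∈ F, IsMeanReward f) (hg : IsMeanReward g) (hn : n ≠ 0) (hε : 0 < ε) (hb : 0 ≤ b)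
    (hnε : n * ε ^ 2 ≤ (2 * b) ^ 2) (hc : deficit g c ≤ η) (hθ0 : 0 ≤ θ + 1)
    (hθ : θ + 1 ≤ n * (Δ + (1 - γ) * (⨆ x, g x) - 2 * η)) :
    ∃ f ∈ F,
      ∫ h, cumulative f h ∂frozenLaw alg (deficit g) θ c g n < n * (γ * (⨆ x, f x) - (Δ - η)) ∧
      ∫ h, cumulative |f - g| h ∂frozenLaw alg (deficit g) θ c g n ≤ n * ε ∧
      γ * (⨆ x, g x) - ε ≤ γ * (⨆ x, f x) ∧
      ∀ H, MeasurableSet H → (frozenLaw alg (deficit g) θ c g n).real H ≤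
        (frozenLaw alg (deficit g) θ c f n).real H + b := by
  have hdm := measurable_deficit hg.measurable
  have := isProbabilityMeasure_frozenLaw alg hg.measurable (θ := θ) (c := c) hdm n
  set ν := frozenLaw alg (deficit g) θ c g n
  obtain ⟨f, hfF, hf, hsq, hlow⟩ := href.exists_cumulative_lt hF hg hn ν
  have hn0 : (0 : ℝ) < n := Nat.cast_pos.2 (Nat.pos_of_ne_zero hn)
  have hgapm : Measurable (f - g) := hf.measurable.sub hg.measurable
  have hgap1 := hf.abs_sub_le_one hg
  have hgap : ∫ h, cumulative |f - g| h ∂ν ≤ n * ε :=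
    integral_cumulative_abs_le hgapm hgap1 ν hε hsq
  have hfi := integrable_cumulative hf.measurable hf.abs_le_one ν
  have hgi := integrable_cumulative hg.measurable hg.abs_le_one ν
  have hgain : n * (⨆ y, g y) - (θ + 1 + n * η) ≤ ∫ h, cumulative g h ∂ν := by
    simpa only [integral_const, probReal_univ, one_smul] using
      integral_mono_ae (integrable_const _) hgi (ae_le_cumulative_frozenLaw alg g hg hc hθ0)
  have hdi : Integrable (cumulative |f - g|) ν :=
    integrable_cumulative hgapm.abs (fun x => (abs_abs _).trans_le (hgap1 x)) ν
  have hclose : ∫ h, cumulative g h ∂ν ≤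
      ∫ h, cumulative f h ∂ν + ∫ h, cumulative |f - g| h ∂ν := by
    refine (integral_mono hgi (hfi.add hdi) fun h => ?_).trans_eq (integral_add hfi hdi)
    rw [Pi.add_apply]
    linarith [(abs_le.1 (abs_cumulative_sub_le f g h)).1]
  have hfg : f ≠ g := fun h => by subst h; linarith
  exact ⟨f, hfF.resolve_right hfg, hlow, hgap,
    le_of_mul_le_mul_left (by linarith) hn0, fun H hH => measureReal_frozenLaw_le_add alg hf hg
      hg.deficit_nonneg hdm hb (hsq.trans hnε) hH⟩

end HardModel

section FirstPass

variable {P : Type*} {f g : P → ℝ} {γ r θ : ℝ} {n : ℕ}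

/-- The histories of `n` rounds whose cumulative γ-regret under the model `f` is at least
`n * r`. -/
def highRegret (γ r : ℝ) (f : P → ℝ) (n : ℕ) : Set (Fin n → P × ℝ) :=
  {h | cumulative f h ≤ n * (γ * (⨆ x, f x) - r)}

/-- The histories whose total deficit under `g` stays below the budget `θ`, so that `freeze` does
not alter them. -/
def alive (g : P → ℝ) (θ : ℝ) (n : ℕ) : Set (Fin n → P × ℝ) :=
  {h | ∑ i, deficit g (h i) < θ}

/-- The histories along which the mean rewards under `f` and `g` differ by at least `K` in total. -/
def discrepant (f g : P → ℝ) (K : ℝ) (n : ℕ) : Set (Fin n → P × ℝ) :=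
  {h | K ≤ cumulative |f - g| h}

lemma lt_cumulative_of_notMem_highRegret {Δ ε u C L : ℝ} (hε : 0 < ε) (hC : 2 ≤ C)
    (hγ : 0 ≤ γ) (hu : 18 * C * ε ≤ u) (hfg : γ * (⨆ x, g x) - ε ≤ γ * (⨆ x, f x))
    (hL : L ≤ ⨆ x, f x) {h : Fin n → P × ℝ} (hnear : h ∉ discrepant f g (12 * C * (n * ε)) n)
    (hh : h ∉ highRegret γ (Δ - u) f n) :
    n * (γ * max (⨆ x, g x) L - Δ + 11 * ε) < cumulative g h := by
  have hmax : γ * max (⨆ x, g x) L ≤ γ * (⨆ x, f x) + ε := by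
    have hγL : γ * L ≤ γ * (⨆ x, f x) := mul_le_mul_of_nonneg_left hL hγ
    rw [mul_max_of_nonneg _ _ hγ]
    exact max_le (by linarith) (by linarith)
  have hclose := (abs_le.1 (abs_cumulative_sub_le f g h)).2
  have hfar : cumulative |f - g| h < 12 * C * (n * ε) := not_le.1 hnear
  have hlow : n * (γ * (⨆ x, f x) - (Δ - u)) < cumulative f h := not_le.1 hh
  have hCε : 2 * ε ≤ C * ε := by gcongr
  have hscale : n * (γ * max (⨆ x, g x) L - Δ + 11 * ε) ≤
      n * (γ * (⨆ x, f x) - (Δ - u) - 12 * C * ε) := by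
    gcongr
    linarith
  linarith

variable [MeasurableSpace P] {c : P × ℝ}

lemma measurableSet_highRegret (hf : Measurable f) : MeasurableSet (highRegret γ r f n) :=
  measurableSet_le (measurable_cumulative hf) measurable_const

lemma measurableSet_alive (hg : Measurable g) : MeasurableSet (alive g θ n) :=
  measurableSet_lt (measurable_sum_comp (measurable_deficit hg) _) measurable_const

lemma measurableSet_discrepant (hf : Measurable f) (hg : Measurable g) {K : ℝ} :
    MeasurableSet (discrepant f g K n) :=
  measurableSet_le measurable_const (measurable_cumulative (hf.sub hg).abs)

lemma IsMeanReward.freeze_mem_alive_iff (hg : IsMeanReward g) {h : Fin n → P × ℝ} :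
    freeze (deficit g) θ c h ∈ alive g θ n ↔ h ∈ alive g θ n :=
  sum_freeze_lt_iff hg.deficit_nonneg

lemma IsMeanReward.freeze_of_mem_alive (hg : IsMeanReward g) {h : Fin n → P × ℝ}
    (hh : h ∈ alive g θ n) : freeze (deficit g) θ c h = h :=
  freeze_eq_self hg.deficit_nonneg hh

lemma measureReal_discrepant_le (hf : IsMeanReward f) (hg : IsMeanReward g) (hn : n ≠ 0)
    {ε K : ℝ} (hε : 0 < ε) (hK : 0 < K) (ν : Measure (Fin n → P × ℝ)) [IsFiniteMeasure ν]
    (hint : ∫ h, cumulative |f - g| h ∂ν ≤ n * ε) :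
    ν.real (discrepant f g (K * (n * ε)) n) ≤ K⁻¹ := by
  have hnε : 0 < n * ε := mul_pos (Nat.cast_pos.2 (Nat.pos_of_ne_zero hn)) hε
  have hmarkov := mul_meas_ge_le_integral_of_nonneg (.of_forall (cumulative_abs_nonneg (f - g)))
    (integrable_cumulative (hf.measurable.sub hg.measurable).abs
      (fun x => (abs_abs _).trans_le (hf.abs_sub_le_one hg x)) ν) (K * (n * ε))
  rw [← one_div, le_div_iff₀ hK]
  refine le_of_mul_le_mul_left ?_ hnε
  rw [discrepant]
  linarith

lemma exists_cumulative_le_of_notMem_alive (hf : IsMeanReward f) (hg : IsMeanReward g)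
    {h : Fin n → P × ℝ} (hh : h ∉ alive g θ n) :
    ∃ κ D : ℝ, κ ≤ n ∧ θ ≤ D ∧ D ≤ κ * (⨆ x, g x) ∧
      cumulative f h ≤ κ * (⨆ x, g x) - D + (n - κ) * (⨆ x, f x) +
        cumulative |f - g| (freeze (deficit g) θ c h) := by
  let live : Finset (Fin n) := {i | ∑ j ∈ Finset.Iio i, deficit g (h j) < θ}
  have hcard : (live.card : ℝ) + (liveᶜ.card : ℝ) = n := by
    exact_mod_cast live.card_add_card_compl.trans (Fintype.card_fin n)
  have hround : ∀ i, f (h i).1 ≤ (if i ∈ live then (⨆ x, g x) - deficit g (h i) else ⨆ x, f x) +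
      |f - g| (freeze (deficit g) θ c h i).1 := by
    intro i
    split_ifs with hi
    · have hfreeze : freeze (deficit g) θ c h i = h i := if_pos (Finset.mem_filter.1 hi).2
      rw [hfreeze, deficit, sub_sub_cancel]
      exact sub_le_iff_le_add'.1 (le_abs_self (f (h i).1 - g (h i).1))
    · exact le_add_of_le_of_nonneg (hf.le_iSup _) (abs_nonneg _)
  refine ⟨live.card, ∑ i ∈ live, deficit g (h i), ?_, ?_, ?_, ?_⟩
  · exact hcard.le.trans' (le_add_of_nonneg_right (Nat.cast_nonneg _))
  · exact le_sum_live hg.deficit_nonneg (not_lt.1 hh)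
  · rw [← nsmul_eq_mul]
    exact Finset.sum_le_card_nsmul _ _ _ fun i _ => sub_le_self _ (hg.mem_Icc _).1
  · refine (Finset.sum_le_sum fun i _ => hround i).trans_eq ?_
    have hfilter : Finset.univ.filter (· ∈ live) = live := Finset.filter_univ_mem live
    have hfilter' : Finset.univ.filter (· ∉ live) = liveᶜ := (Finset.compl_filter ..).symm.trans
      (congrArg _ hfilter)
    rw [Finset.sum_add_distrib, Finset.sum_ite, hfilter, hfilter', Finset.sum_sub_distrib,
      Finset.sum_const, Finset.sum_const, nsmul_eq_mul, nsmul_eq_mul, ← hcard]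
    simp only [cumulative, add_sub_cancel_left]

lemma exhausted_budget_bound {γ Δ ε u N C b A κ D : ℝ} (hN : 0 < N) (hε : 0 < ε)
    (hNε : 4 ≤ N * ε) (hC : 2 ≤ C) (hΔ : 24 * ε ≤ Δ)
    (hu : 18 * C * ε ≤ u) (hb : 0 ≤ b) (hκN : κ ≤ N)
    (hD : N * (Δ + (1 - γ) * b - 2 * (ε / 8)) - 1 ≤ D) (hκ : D ≤ κ * b)
    (hA : γ * b - ε ≤ γ * A) :
    κ * b - D + (N - κ) * A + 12 * C * (N * ε) ≤ N * (γ * A - (Δ - u)) := by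
  have hNu : N * (18 * C * ε) ≤ N * u := by gcongr
  have hNΔ : N * (24 * ε) ≤ N * Δ := by gcongr
  have hNC : 2 * (N * ε) ≤ C * (N * ε) := by gcongr
  have hgap : (κ - N * (1 - γ)) * (b - A) ≤ N * ε := by
    rcases le_or_gt b A with h | h
    · -- The exhausted budget exceeds `N * (1 - γ) * b`, hence so does the number of live rounds.
      have hlive : N * (1 - γ) ≤ κ := by
        by_contra! hfew
        have := mul_le_mul_of_nonneg_right hfew.le hb
        linarith
      exact (mul_nonpos_of_nonneg_of_nonpos (sub_nonneg.2 hlive) (sub_nonpos.2 h)).trans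
        (by positivity)
    · calc (κ - N * (1 - γ)) * (b - A) ≤ N * γ * (b - A) := by gcongr; linarith
        _ = N * (γ * (b - A)) := by ring
        _ ≤ N * ε := by gcongr; linarith
  linarith

lemma mem_highRegret_of_freeze_mem {Δ ε u C : ℝ} (hf : IsMeanReward f) (hg : IsMeanReward g)
    (hn : n ≠ 0) (hε : 0 < ε) (hnε : 4 ≤ n * ε) (hC : 2 ≤ C) (hΔ : 24 * ε ≤ Δ)
    (hu : 18 * C * ε ≤ u) (hfg : γ * (⨆ x, g x) - ε ≤ γ * (⨆ x, f x))
    (hθ : n * (Δ + (1 - γ) * (⨆ x, g x) - 2 * (ε / 8)) - 1 ≤ θ) {h : Fin n → P × ℝ}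
    (hnear : freeze (deficit g) θ c h ∉ discrepant f g (12 * C * (n * ε)) n)
    (hh : freeze (deficit g) θ c h ∈ (alive g θ n)ᶜ ∪ highRegret γ (Δ - u) f n) :
    h ∈ highRegret γ (Δ - u) f n := by
  by_cases halive : h ∈ alive g θ n
  · rw [hg.freeze_of_mem_alive halive] at hh
    exact hh.resolve_left (not_not.2 halive)
  · obtain ⟨κ, D, hκn, hθD, hDκ, hsum⟩ :=
      exists_cumulative_le_of_notMem_alive (c := c) hf hg halive
    have hbound := exhausted_budget_bound (Nat.cast_pos.2 (Nat.pos_of_ne_zero hn)) hε hnε hC hΔ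
      hu hg.iSup_mem_Icc.1 hκn (hθ.trans hθD) hDκ hfg
    refine hsum.trans (le_trans ?_ hbound)
    gcongr
    exact (not_le.1 hnear).le

variable (alg : (t : ℕ) → Kernel (Fin t → P × ℝ) P) [∀ t, IsMarkovKernel (alg t)]

lemma measureReal_cumulative_le_of_confusable {Δ ε u C L : ℝ} (hf : IsMeanReward f)
    (hg : IsMeanReward g) (hn : n ≠ 0) (hε : 0 < ε) (hnε : 4 ≤ n * ε) (hC : 2 ≤ C) (hγ : 0 ≤ γ)
    (hΔ : 24 * ε ≤ Δ) (hu : 18 * C * ε ≤ u) (hL : L ≤ ⨆ x, f x)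
    (hθ : n * (Δ + (1 - γ) * (⨆ x, g x) - 2 * (ε / 8)) - 1 ≤ θ)
    (hfail : (trajMeasure f alg n).real (highRegret γ (Δ - u) f n) ≤ 1 / (3 * C))
    (hfg : γ * (⨆ x, g x) - ε ≤ γ * (⨆ x, f x))
    (hgap : ∫ h, cumulative |f - g| h ∂frozenLaw alg (deficit g) θ c g n ≤ n * ε)
    (hconf : ∀ H, MeasurableSet H → (frozenLaw alg (deficit g) θ c g n).real H ≤
      (frozenLaw alg (deficit g) θ c f n).real H + 1 / (6 * C)) :
    (trajMeasure g alg n).real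
      {h | cumulative g h ≤ n * (γ * max (⨆ x, g x) L - Δ + 11 * ε)} ≤ 7 / (12 * C) := by
  have := isProbabilityMeasure_trajMeasure alg hg.measurable n
  have := isProbabilityMeasure_trajMeasure alg hf.measurable n
  have := isProbabilityMeasure_frozenLaw alg hg.measurable (θ := θ) (c := c)
    (measurable_deficit hg.measurable) n
  let far := discrepant f g (12 * C * (n * ε)) n
  let bad := farᶜ ∩ ((alive g θ n)ᶜ ∪ highRegret γ (Δ - u) f n)
  have hfarm : MeasurableSet far := measurableSet_discrepant hf.measurable hg.measurable
  have hbadm : MeasurableSet bad := hfarm.compl.inter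
    ((measurableSet_alive hg.measurable).compl.union (measurableSet_highRegret hf.measurable))
  have hbad : (frozenLaw alg (deficit g) θ c g n).real bad ≤ 1 / (3 * C) + 1 / (6 * C) := by
    refine (hconf bad hbadm).trans (add_le_add_left ?_ _)
    rw [measureReal_frozenLaw alg f hg.measurable hbadm]
    exact (measureReal_mono fun h hh =>
      mem_highRegret_of_freeze_mem hf hg hn hε hnε hC hΔ hu hfg hθ hh.1 hh.2).trans hfail
  have hsub : {h | cumulative g h ≤ n * (γ * max (⨆ x, g x) L - Δ + 11 * ε)} ⊆
      freeze (deficit g) θ c ⁻¹' (far ∪ bad) := by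
    refine fun h hh => by_contra fun hout => ?_
    obtain ⟨hnear, hgood⟩ := not_or.1 hout
    obtain ⟨hlive, hlow⟩ := not_or.1 fun hor => hgood ⟨hnear, hor⟩
    rw [hg.freeze_of_mem_alive (hg.freeze_mem_alive_iff.1 (not_not.1 hlive))] at hnear hlow
    exact (lt_cumulative_of_notMem_highRegret hε hC hγ hu hfg hL hnear hlow).not_ge hh
  refine (measureReal_mono hsub).trans ?_
  rw [← measureReal_frozenLaw alg g hg.measurable (hfarm.union hbadm)]
  calc (frozenLaw alg (deficit g) θ c g n).real (far ∪ bad)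
      ≤ (12 * C)⁻¹ + (1 / (3 * C) + 1 / (6 * C)) := (measureReal_union_le _ _).trans
        (add_le_add (measureReal_discrepant_le hf hg hn hε (by positivity) _ hgap) hbad)
    _ = 7 / (12 * C) := by field_simp; norm_num

lemma measureReal_cumulative_le_of_isHardReference {F : Set (P → ℝ)} {Δ ε u C L : ℝ}
    (hF : ∀ f ∈ F, IsMeanReward f) (hg : IsMeanReward g)
    (href : IsHardReference γ ε (Δ - ε / 8) F g) (hn : n ≠ 0) (hε : 0 < ε) (hnε : 4 ≤ n * ε)
    (hnε2 : n * ε ^ 2 ≤ (2 * (1 / (6 * C))) ^ 2) (hC : 2 ≤ C) (hγ : γ ∈ Set.Ioc (0 : ℝ) 1)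
    (hΔ : 24 * ε ≤ Δ) (hu : 18 * C * ε ≤ u) (hc : deficit g c ≤ ε / 8)
    (hL : ∀ f ∈ F, L ≤ ⨆ x, f x)
    (hfail : ∀ f ∈ F, (trajMeasure f alg n).real (highRegret γ (Δ - u) f n) ≤ 1 / (3 * C)) :
    (trajMeasure g alg n).real
      {h | cumulative g h ≤ n * (γ * max (⨆ x, g x) L - Δ + 11 * ε)} ≤ 7 / (12 * C) := by
  have hslack : 0 ≤ (1 - γ) * (⨆ x, g x) := mul_nonneg (sub_nonneg.2 hγ.2) hg.iSup_mem_Icc.1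
  have hbudget : 0 ≤ n * (Δ + (1 - γ) * (⨆ x, g x) - 2 * (ε / 8)) :=
    mul_nonneg n.cast_nonneg (by linarith)
  have : 0 < C := two_pos.trans_le hC
  obtain ⟨f, hfF, -, hgap, hfg, hconf⟩ := href.exists_confusable alg hF hg hn hε
    (by positivity) hnε2 hc (by rwa [sub_add_cancel]) (sub_add_cancel _ 1).le
  exact measureReal_cumulative_le_of_confusable alg (hF f hfF) hg hn hε hnε hC hγ.1.le hΔ hu
    (hL f hfF) le_rfl (hfail f hfF) hfg hgap hconf

end FirstPass

section SecondPass

lemma measureReal_mul_add_compl_mul_le_integral {Ω : Type*} [MeasurableSpace Ω] {ν : Measure Ω}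
    [IsFiniteMeasure ν] {X : Ω → ℝ} (hX : Integrable X ν) {E : Set Ω} (hE : MeasurableSet E)
    {a b : ℝ} (ha : ∀ᵐ ω ∂ν, ω ∈ E → a ≤ X ω) (hb : ∀ᵐ ω ∂ν, ω ∉ E → b ≤ X ω) :
    ν.real E * a + ν.real Eᶜ * b ≤ ∫ ω, X ω ∂ν := by
  have hconst : ∀ (S : Set Ω) (k : ℝ), MeasurableSet S → (∀ᵐ ω ∂ν, ω ∈ S → k ≤ X ω) →
      ν.real S * k ≤ ∫ ω in S, X ω ∂ν := by
    intro S k hS hk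
    rw [← smul_eq_mul, ← setIntegral_const]
    exact setIntegral_mono_on_ae (integrable_const k).integrableOn hX.integrableOn hS hk
  rw [← integral_add_compl hE hX]
  exact add_le_add (hconst E a hE ha) (hconst Eᶜ b hE.compl hb)

variable {P : Type*} {f g : P → ℝ} {γ r θ : ℝ} {n : ℕ} [MeasurableSpace P] {c : P × ℝ}

lemma IsMeanReward.cumulative_le (hg : IsMeanReward g) (h : Fin n → P × ℝ) :
    cumulative g h ≤ n * (⨆ x, g x) := by
  refine (Finset.sum_le_sum fun i _ => hg.le_iSup (h i).1).trans_eq ?_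
  rw [Finset.sum_const, Finset.card_univ, Fintype.card_fin, nsmul_eq_mul]

lemma measureReal_mul_add_le_integral_cumulative (hf : IsMeanReward f) (hg : IsMeanReward g)
    (ν : Measure (Fin n → P × ℝ)) [IsFiniteMeasure ν] {E : Set (Fin n → P × ℝ)}
    (hE : MeasurableSet E) {s : ℝ} (hfE : ∀ h ∈ E, r ≤ cumulative f h)
    (hs : ∀ᵐ h ∂ν, s ≤ cumulative g h) :
    ν.real E * r + ν.real Eᶜ * s ≤ ∫ h, cumulative f h ∂ν + ∫ h, cumulative |f - g| h ∂ν := by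
  have hfi := integrable_cumulative hf.measurable hf.abs_le_one ν
  have hdi : Integrable (cumulative |f - g|) ν :=
    integrable_cumulative (hf.measurable.sub hg.measurable).abs
      (fun x => (abs_abs _).trans_le (hf.abs_sub_le_one hg x)) ν
  rw [← integral_add hfi hdi]
  refine measureReal_mul_add_compl_mul_le_integral (hfi.add hdi) hE (.of_forall fun h hh => ?_) ?_
  · exact (hfE h hh).trans (le_add_of_nonneg_right (cumulative_abs_nonneg (f - g) h))
  · filter_upwards [hs] with h hh _
    rw [Pi.add_apply]
    linarith [(abs_le.1 (abs_cumulative_sub_le f g h)).1]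

lemma measureReal_mul_sub_le_integral_cumulative_abs (hf : IsMeanReward f) (hg : IsMeanReward g)
    (ν : Measure (Fin n → P × ℝ)) [IsFiniteMeasure ν] {E : Set (Fin n → P × ℝ)}
    (hE : MeasurableSet E) (hfE : ∀ h ∈ E, r ≤ cumulative f h) :
    ν.real E * (r - n * (⨆ x, g x)) ≤ ∫ h, cumulative |f - g| h ∂ν := by
  have hdi : Integrable (cumulative |f - g|) ν :=
    integrable_cumulative (hf.measurable.sub hg.measurable).abs
      (fun x => (abs_abs _).trans_le (hf.abs_sub_le_one hg x)) ν
  refine (le_add_of_nonneg_right (mul_zero _).ge).trans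
    (measureReal_mul_add_compl_mul_le_integral hdi hE (.of_forall fun h hh => ?_)
      (.of_forall fun h _ => cumulative_abs_nonneg (f - g) h))
  linarith [hfE h hh, hg.cumulative_le h, (abs_le.1 (abs_cumulative_sub_le f g h)).2]

lemma mul_sub_mul_max_le_min {γ Δ ρ A b : ℝ} (hγ : γ ∈ Set.Icc (0 : ℝ) 1) (hA : A ≤ 1)
    (hb : b ≤ 1) (hρA : 1 - ρ ≤ A) (hAb : γ * A - Δ ≤ b) :
    γ * A - γ * max b (1 - ρ) ≤ min ρ (Δ + 1 - γ) := by
  rw [mul_max_of_nonneg _ _ hγ.1]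
  have hleft := le_max_left (γ * b) (γ * (1 - ρ))
  have hright := le_max_right (γ * b) (γ * (1 - ρ))
  have hρ : γ * (A - (1 - ρ)) ≤ A - (1 - ρ) := mul_le_of_le_one_left (sub_nonneg.2 hρA) hγ.2
  have hγb : (1 - γ) * b ≤ 1 - γ := mul_le_of_le_one_right (sub_nonneg.2 hγ.2) hb
  exact le_min (by linarith) (by linarith)

lemma false_of_second_pass_bounds {γ Δ ε ρ C m u b A q : ℝ} (hε : 0 < ε)
    (hγ : γ ∈ Set.Icc (0 : ℝ) 1) (hC : 2 ≤ C) (hm : m = min ρ (Δ + 1 - γ))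
    (hmε : 6 * C ^ 2 * ε ≤ m) (hu : u = 3 * m / C) (hb : b ≤ 1) (hA : A ≤ 1) (hρA : 1 - ρ ≤ A)
    (hq0 : 0 ≤ q) (hq : q ≤ 13 / (12 * C))
    (hlow : (1 - q) * (γ * A - (Δ - u)) + q * (γ * max b (1 - ρ) - Δ) <
      γ * A - (Δ - ε / 8) + ε)
    (hgap : (1 - q) * (γ * A - (Δ - u) - b) ≤ ε) : False := by
  have hC0 : 0 < C := two_pos.trans_le hC
  have hCu : C * u = 3 * m := by rw [hu]; field_simp
  have hqC : q * C ≤ 13 / 12 := by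
    rw [le_div_iff₀ (by positivity)] at hq
    linarith
  have hq24 : 11 / 24 ≤ 1 - q := by linarith [mul_le_mul_of_nonneg_left hC hq0]
  have hCε : 2 * (C * ε) ≤ C * (C * ε) := by gcongr
  have huC : 18 * (C * ε) ≤ u := le_of_mul_le_mul_left (by linarith) hC0
  have huε : 36 * ε ≤ u := by linarith [mul_le_mul_of_nonneg_right hC hε.le]
  have hAb : γ * A - Δ ≤ b := by
    by_contra! hlt
    have : 11 / 24 * u ≤ (1 - q) * (γ * A - (Δ - u) - b) := by
      gcongr <;> linarith
    linarith
  have hqm : q * (γ * A - γ * max b (1 - ρ)) ≤ q * m := by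
    rw [hm]
    exact mul_le_mul_of_nonneg_left (mul_sub_mul_max_le_min hγ hA hb hρA hAb) hq0
  have hmpos : 0 < m := hmε.trans_lt' (by positivity)
  have hslack : C * ((1 - q) * u) < C * (q * m + 9 / 8 * ε) :=
    mul_lt_mul_of_pos_left (by linarith) hC0
  have hmain : 11 / 24 * (3 * m) ≤ (1 - q) * (3 * m) := by gcongr
  have hqCm : q * C * m ≤ 13 / 12 * m := by gcongr
  rw [mul_left_comm, hCu] at hslack
  linarith

variable (alg : (t : ℕ) → Kernel (Fin t → P × ℝ) P) [∀ t, IsMarkovKernel (alg t)]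

lemma measureReal_compl_alive_sdiff_highRegret_le {δ C : ℝ} (hf : IsMeanReward f)
    (hg : IsMeanReward g)
    (hdead : (trajMeasure g alg n).real {h | cumulative g h ≤ n * (⨆ x, g x) - θ} ≤ 7 / (12 * C))
    (hfail : (trajMeasure f alg n).real (highRegret γ δ f n) ≤ 1 / (3 * C))
    (hconf : ∀ H, MeasurableSet H → (frozenLaw alg (deficit g) θ c g n).real H ≤
      (frozenLaw alg (deficit g) θ c f n).real H + 1 / (6 * C)) :
    (frozenLaw alg (deficit g) θ c g n).real (alive g θ n \ highRegret γ δ f n)ᶜ ≤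
      13 / (12 * C) := by
  have := isProbabilityMeasure_trajMeasure alg hg.measurable n
  have := isProbabilityMeasure_trajMeasure alg hf.measurable n
  have := isProbabilityMeasure_frozenLaw alg hg.measurable (θ := θ) (c := c)
    (measurable_deficit hg.measurable) n
  have halive := measurableSet_alive (θ := θ) (n := n) hg.measurable
  have hhigh := measurableSet_highRegret (γ := γ) (r := δ) (n := n) hf.measurable
  have hexhausted : (frozenLaw alg (deficit g) θ c g n).real (alive g θ n)ᶜ ≤ 7 / (12 * C) := by
    rw [measureReal_frozenLaw alg g hg.measurable halive.compl]
    refine (measureReal_mono fun h hh => ?_).trans hdead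
    have hspent : θ ≤ ∑ i, deficit g (h i) := not_lt.1 (mt hg.freeze_mem_alive_iff.2 hh)
    exact le_sub_comm.1 (hspent.trans_eq (sum_deficit g h))
  have hlow : (frozenLaw alg (deficit g) θ c g n).real (alive g θ n ∩ highRegret γ δ f n) ≤
      1 / (3 * C) + 1 / (6 * C) := by
    refine (hconf _ (halive.inter hhigh)).trans (add_le_add_left ?_ _)
    rw [measureReal_frozenLaw alg f hg.measurable (halive.inter hhigh)]
    refine (measureReal_mono fun h hh => ?_).trans hfail
    exact hg.freeze_of_mem_alive (c := c) (hg.freeze_mem_alive_iff.1 hh.1) ▸ hh.2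
  have hcover : (alive g θ n \ highRegret γ δ f n)ᶜ ⊆
      (alive g θ n)ᶜ ∪ alive g θ n ∩ highRegret γ δ f n := fun h hh =>
    (em' _).imp_right fun hlive => ⟨hlive, not_not.1 fun hgood => hh ⟨hlive, hgood⟩⟩
  calc _ ≤ 7 / (12 * C) + (1 / (3 * C) + 1 / (6 * C)) :=
        (measureReal_mono hcover).trans
          ((measureReal_union_le _ _).trans (add_le_add hexhausted hlow))
    _ = 13 / (12 * C) := by field_simp; norm_num

lemma exists_exceptional_mass {δ η s C : ℝ} (hf : IsMeanReward f) (hg : IsMeanReward g)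
    (hc : deficit g c ≤ η) (hθ : 0 ≤ θ + 1) (hs : s ≤ n * (⨆ x, g x) - (θ + 1 + n * η))
    (hdead : (trajMeasure g alg n).real {h | cumulative g h ≤ n * (⨆ x, g x) - θ} ≤ 7 / (12 * C))
    (hfail : (trajMeasure f alg n).real (highRegret γ δ f n) ≤ 1 / (3 * C))
    (hconf : ∀ H, MeasurableSet H → (frozenLaw alg (deficit g) θ c g n).real H ≤
      (frozenLaw alg (deficit g) θ c f n).real H + 1 / (6 * C)) :
    ∃ q : ℝ, 0 ≤ q ∧ q ≤ 13 / (12 * C) ∧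
      (1 - q) * (n * (γ * (⨆ x, f x) - δ)) + q * s ≤
        ∫ h, cumulative f h ∂frozenLaw alg (deficit g) θ c g n +
          ∫ h, cumulative |f - g| h ∂frozenLaw alg (deficit g) θ c g n ∧
      (1 - q) * (n * (γ * (⨆ x, f x) - δ) - n * (⨆ x, g x)) ≤
        ∫ h, cumulative |f - g| h ∂frozenLaw alg (deficit g) θ c g n := by
  have := isProbabilityMeasure_frozenLaw alg hg.measurable (θ := θ) (c := c)
    (measurable_deficit hg.measurable) n
  have hE : MeasurableSet (alive g θ n \ highRegret γ δ f n) :=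
    (measurableSet_alive hg.measurable).diff (measurableSet_highRegret hf.measurable)
  have hfE : ∀ h ∈ alive g θ n \ highRegret γ δ f n, n * (γ * (⨆ x, f x) - δ) ≤ cumulative f h :=
    fun h hh => (not_le.1 hh.2).le
  have hfloor := (ae_le_cumulative_frozenLaw alg g hg hc hθ (n := n)).mono fun h hh => hs.trans hh
  have hmass := probReal_compl_eq_one_sub (μ := frozenLaw alg (deficit g) θ c g n) hE.compl
  rw [compl_compl] at hmass
  refine ⟨_, measureReal_nonneg,
    measureReal_compl_alive_sdiff_highRegret_le alg hf hg hdead hfail hconf, ?_, ?_⟩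
  · exact hmass ▸ measureReal_mul_add_le_integral_cumulative hf hg _ hE hfE hfloor
  · exact hmass ▸ measureReal_mul_sub_le_integral_cumulative_abs hf hg _ hE hfE

lemma lt_iSup_of_measureReal_cumulative_le_lt_one (hg : IsMeanReward g) {a : ℝ}
    (ha : (trajMeasure g alg n).real {h | cumulative g h ≤ n * a} < 1) : a < ⨆ x, g x := by
  have := isProbabilityMeasure_trajMeasure alg hg.measurable n
  by_contra! hle
  have huniv : {h : Fin n → P × ℝ | cumulative g h ≤ n * a} = Set.univ :=
    Set.eq_univ_of_forall fun h => (hg.cumulative_le h).trans (by gcongr)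
  rw [huniv, probReal_univ] at ha
  exact ha.false

lemma false_of_measureReal_cumulative_le {F : Set (P → ℝ)} {Δ ε ρ C m u : ℝ}
    (hF : ∀ f ∈ F, IsMeanReward f) (hg : IsMeanReward g)
    (href : IsHardReference γ ε (Δ - ε / 8) F g) (hn : n ≠ 0) (hε : 0 < ε) (hnε : 4 ≤ n * ε)
    (hnε2 : n * ε ^ 2 ≤ (2 * (1 / (6 * C))) ^ 2) (hC : 2 ≤ C) (hγ : γ ∈ Set.Ioc (0 : ℝ) 1)
    (hm : m = min ρ (Δ + 1 - γ)) (hmε : 6 * C ^ 2 * ε ≤ m) (hu : u = 3 * m / C)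
    (hc : deficit g c ≤ ε / 8) (hρ : ∀ f ∈ F, 1 - ρ ≤ ⨆ x, f x)
    (hfail : ∀ f ∈ F, (trajMeasure f alg n).real (highRegret γ (Δ - u) f n) ≤ 1 / (3 * C))
    (hrare : (trajMeasure g alg n).real
      {h | cumulative g h ≤ n * (γ * max (⨆ x, g x) (1 - ρ) - Δ + 11 * ε)} ≤ 7 / (12 * C)) :
    False := by
  have : 0 < C := two_pos.trans_le hC
  have hn0 : (0 : ℝ) < n := Nat.cast_pos.2 (Nat.pos_of_ne_zero hn)
  have := isProbabilityMeasure_trajMeasure alg hg.measurable n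
  obtain ⟨v, hv⟩ : ∃ v, v = γ * max (⨆ x, g x) (1 - ρ) - Δ := ⟨_, rfl⟩
  rw [← hv] at hrare
  have hvg : v + 11 * ε < ⨆ x, g x := lt_iSup_of_measureReal_cumulative_le_lt_one alg hg
    (hrare.trans_lt ((div_lt_one (by positivity)).2 (by linarith)))
  have hγv : γ * (⨆ x, g x) - Δ ≤ v :=
    hv ▸ sub_le_sub_right (mul_le_mul_of_nonneg_left (le_max_left _ _) hγ.1.le) Δ
  obtain ⟨θ, hθ⟩ : ∃ θ, θ + 1 = n * ((⨆ x, g x) - v - 2 * (ε / 8)) := ⟨_, sub_add_cancel _ 1⟩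
  have hθ0 : 0 ≤ θ + 1 := hθ ▸ mul_nonneg hn0.le (by linarith)
  obtain ⟨f, hfF, hlow, hgap, -, hconf⟩ := href.exists_confusable alg hF hg hn hε
    (by positivity) hnε2 hc hθ0 (hθ.trans_le (by gcongr; linarith))
  have hf := hF f hfF
  have hdead : (trajMeasure g alg n).real {h | cumulative g h ≤ n * (⨆ x, g x) - θ} ≤
      7 / (12 * C) :=
    (measureReal_mono fun h (hh : cumulative g h ≤ _) => hh.trans (by linarith)).trans hrare
  obtain ⟨q, hq0, hq, hlower, hupper⟩ := exists_exceptional_mass alg hf hg hc hθ0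
    (s := n * v) (by linarith) hdead (hfail f hfF) hconf
  exact false_of_second_pass_bounds hε ⟨hγ.1.le, hγ.2⟩ hC hm hmε hu hg.iSup_mem_Icc.2
    hf.iSup_mem_Icc.2 (hρ f hfF) hq0 hq
    (lt_of_mul_lt_mul_left (by rw [← hv]; linarith) hn0.le)
    (le_of_mul_le_mul_left (by linarith) hn0)

end SecondPass

section LowerBound

variable {P : Type*} [MeasurableSpace P] {F : Set (P → ℝ)} {γ ε ρ C : ℝ}

lemma exists_lt_measureReal_highRegret [Nonempty P] (hF : ∀ f ∈ F, IsMeanReward f)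
    (hρ : ∀ f ∈ F, 1 - ρ ≤ ⨆ x, f x) (hγ : γ ∈ Set.Ioc (0 : ℝ) 1) (hC : 2 ≤ C) {n : ℕ} (hn : n ≠ 0)
    (hε : 0 < ε) (hnε : 4 ≤ n * ε) (hnε2 : n * ε ^ 2 ≤ (2 * (1 / (6 * C))) ^ 2)
    (hρε : 6 * C ^ 2 * ε ≤ ρ) (hΔ : 6 * C ^ 2 * ε ≤ dec γ ε F)
    (alg : (t : ℕ) → Kernel (Fin t → P × ℝ) P) [∀ t, IsMarkovKernel (alg t)] :
    ∃ f ∈ F, 1 / (3 * C) < (trajMeasure f alg n).real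
      (highRegret γ (dec γ ε F - 3 * min ρ (dec γ ε F + 1 - γ) / C) f n) := by
  by_contra! hfail
  obtain ⟨g, hg, href⟩ := exists_isHardReference hF ⟨hγ.1.le, hγ.2⟩
    (show dec γ ε F - ε / 8 < dec γ ε F by linarith)
  obtain ⟨x, hx⟩ := exists_lt_of_lt_ciSup (show (⨆ y, g y) - ε / 8 < ⨆ y, g y by linarith)
  have hfiller : deficit g (x, 0) ≤ ε / 8 := by
    rw [deficit]
    linarith
  have hm : 6 * C ^ 2 * ε ≤ min ρ (dec γ ε F + 1 - γ) := le_min hρε (by linarith [hγ.2])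
  have hC2 : (2 : ℝ) ^ 2 * ε ≤ C ^ 2 * ε := by gcongr
  have hu : 18 * C * ε ≤ 3 * min ρ (dec γ ε F + 1 - γ) / C := by
    rw [le_div_iff₀ (by positivity)]
    linarith
  exact false_of_measureReal_cumulative_le alg hF hg href hn hε hnε hnε2 hC hγ rfl hm rfl hfiller
    hρ hfail (measureReal_cumulative_le_of_isHardReference alg hF hg href hn hε hnε hnε2 hC hγ
      (by linarith) hu hfiller hρ hfail)

lemma highRegret_eq_setOf_le_average {P : Type*} {n : ℕ} (hn : n ≠ 0) (γ r : ℝ) (f : P → ℝ) :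
    highRegret γ r f n = {h | r ≤ (1 / (n : ℝ)) * ∑ i, (γ * (⨆ x, f x) - f (h i).1)} := by
  ext h
  have hn0 : (0 : ℝ) < n := Nat.cast_pos.2 (Nat.pos_of_ne_zero hn)
  rw [highRegret, Set.mem_ofPred_eq, Set.mem_ofPred_eq, one_div, le_inv_mul_iff₀ hn0,
    Finset.sum_sub_distrib, Finset.sum_const, Finset.card_univ, Fintype.card_fin, nsmul_eq_mul,
    le_sub_comm, mul_sub]
  rfl

theorem main_gamma_regret_lower_bound_general (hF : ∀ f ∈ F, IsMeanReward f)
    (hsup : (⨆ f : F, ⨆ x, (f : P → ℝ) x) = 1) (hγ : γ ∈ Set.Ioc (0 : ℝ) 1) (hC : 2 ≤ C)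
    {T : ℕ} (hT : 1 ≤ T) (hε1 : 4 / (T : ℝ) ≤ ε) (hε2 : ε ≤ 1 / (3 * C * Real.sqrt T))
    (hloc : ∀ f ∈ F, ∀ g ∈ F, (⨆ x, f x) - (⨆ x, g x) ≤ ρ) (hρ : 6 * C ^ 2 * ε ≤ ρ)
    (hΔ : 6 * C ^ 2 * ε ≤ dec γ ε F)
    (alg : (t : ℕ) → Kernel (Fin t → P × ℝ) P) [∀ t, IsMarkovKernel (alg t)] :
    ∃ f ∈ F, ENNReal.ofReal (1 / (3 * C)) ≤ trajMeasure f alg T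
      {ω | dec γ ε F - 3 * min ρ (dec γ ε F + 1 - γ) / C ≤
        (1 / (T : ℝ)) * ∑ t : Fin T, (γ * (⨆ x, f x) - f (ω t).1)} := by
  have hT1 : T ≠ 0 := Nat.one_le_iff_ne_zero.1 hT
  have hT0 : (0 : ℝ) < T := Nat.cast_pos.2 hT
  have hε : 0 < ε := hε1.trans_lt' (by positivity)
  have hTε2 : T * ε ^ 2 ≤ (2 * (1 / (6 * C))) ^ 2 := by
    calc T * ε ^ 2 ≤ T * (1 / (3 * C * Real.sqrt T)) ^ 2 := by gcongr
      _ = (2 * (1 / (6 * C))) ^ 2 := by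
        rw [div_pow, mul_pow _ (Real.sqrt T), Real.sq_sqrt hT0.le]
        field_simp
        norm_num
  have : Nonempty P := by
    by_contra! hP
    simp only [Real.iSup_of_isEmpty, Real.iSup_const_zero, zero_ne_one] at hsup
  have : Nonempty F := by
    by_contra! hempty
    simp only [Real.iSup_of_isEmpty, zero_ne_one] at hsup
  have hnearopt : ∀ f ∈ F, 1 - ρ ≤ ⨆ x, f x := fun f hf =>
    sub_le_iff_le_add.2 <| hsup ▸ ciSup_le fun f' =>
      sub_le_iff_le_add'.1 (hloc f' f'.2 f hf)
  obtain ⟨f, hf, hprob⟩ := exists_lt_measureReal_highRegret hF hnearopt hγ hC hT1 hε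
    (mul_comm ε _ ▸ (div_le_iff₀ hT0).1 hε1) hTε2 hρ hΔ alg
  rw [highRegret_eq_setOf_le_average hT1] at hprob
  exact ⟨f, hf, ENNReal.ofReal_le_of_le_toReal hprob.le⟩

end LowerBound

/-- **Theorem 1 (main lower bound).** For any algorithm there is a model `f` in the
class under which, with probability at least `1/(3C)`, the average γ-regret over `T`
rounds is at least `Δ − 3 min(ρ, Δ+1−γ)/C`, where `Δ = dec^γ_ε(F)`. -/
theorem main_gamma_regret_lower_bound
    {P : Type*} [MeasurableSpace P] (F : Set (P → ℝ))
    (hF : ∀ f ∈ F, Measurable f ∧ ∀ x, f x ∈ Set.Icc (0:ℝ) 1)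
    (hFmax : ∀ f ∈ F, ∃ x, ∀ y, f y ≤ f x)
    (hsup : (⨆ f : F, ⨆ x, (f : P → ℝ) x) = 1)
    (γ : ℝ) (hγ : γ ∈ Set.Ioc (0:ℝ) 1)
    (C : ℕ) (hC : 2 ≤ C)
    (T : ℕ) (hT : 1 ≤ T)
    (ε : ℝ) (hε1 : 4 / (T:ℝ) ≤ ε) (hε2 : ε ≤ 1 / (3 * C * Real.sqrt T))
    (ρ : ℝ)
    (hloc : ∀ f ∈ F, ∀ g ∈ F, (⨆ x, f x) - (⨆ x, g x) ≤ ρ)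
    (hρ : 6 * (C:ℝ)^2 * ε ≤ ρ)
    (hΔ : 6 * (C:ℝ)^2 * ε ≤ dec γ ε F)
    (alg : (t : ℕ) → Kernel (Fin t → P × ℝ) P)
    (halg : ∀ t, IsMarkovKernel (alg t)) :
    ∃ f ∈ F,
      trajMeasure f alg T
        {ω | dec γ ε F - 3 * min ρ (dec γ ε F + 1 - γ) / C ≤
              (1 / (T:ℝ)) * ∑ t : Fin T, (γ * (⨆ x, f x) - f (ω t).1)} ≥
        1 / (3 * (C : ℝ≥0∞)) := by
  obtain ⟨f, hfF, hprob⟩ := main_gamma_regret_lower_bound_general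
    (fun f hf => ⟨(hF f hf).1, (hF f hf).2⟩) hsup hγ (Nat.ofNat_le_cast.2 hC) hT hε1 hε2 hloc
    hρ hΔ alg
  have hC0 : (0 : ℝ) < 3 * C := by positivity
  refine ⟨f, hfF, hprob.trans' (le_of_eq ?_)⟩
  rw [ENNReal.ofReal_div_of_pos hC0, ENNReal.ofReal_one, ENNReal.ofReal_mul zero_le_three,
    ENNReal.ofReal_natCast, ENNReal.ofReal_ofNat]

end
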